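/- (The A_ℓ generalization of Bailey's Lemma.) Let ℓ ≥ 1, let q, a, ρ, σ, x_1, …, x_ℓ be nonzero complex numbers such that every q-shifted factorial occurring in a denominator below is nonzero. Let M(i;j) := ∏_{r,s=1}^{ℓ} ((q x_r/x_s) q^{j_r−j_s}; q)_{i_r−j_r}^{−1} · ∏_{k=1}^{ℓ} (a q x_k/x_ℓ; q)_{i_k+(j_1+⋯+j_ℓ)}^{−1}, and say that sequences A = {A_y}, B = {B_y} of complex numbers indexed by vectors y of nonnegative integers of length ℓ form an A_ℓ-Bailey pair if B_N = ∑_{0 ≤ y_k ≤ N_k, k=1,…,ℓ} M(N;y) A_y for every vector N of nonnegative integers of length ℓ. Given an A_ℓ-Bailey pair (A,B), define A'_N := ∏_{k=1}^{ℓ} ((aq/ρ)(x_k/x_ℓ); q)_{N_k}^{−1} · ∏_{k=1}^{ℓ} (σ x_k/x_ℓ; q)_{N_k} · [(ρ;q)_{|N|} / (aq/σ; q)_{|N|}] · (aq/(ρσ))^{|N|} · A_N, and B'_N := ∑_{0 ≤ y_k ≤ N_k, k=1,…,ℓ} { ∏_{k=1}^{ℓ} [ (σ x_k/x_ℓ;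 q)_{y_k} · ((aq/ρ)(x_k/x_ℓ); q)_{N_k}^{−1} ] · ∏_{r,s=1}^{ℓ} ((q x_r/x_s) q^{y_r−y_s}; q)_{N_r−y_r}^{−1} · [ (aq/(ρσ); q)_{|N|−|y|} · (ρ;q)_{|y|} / (aq/σ; q)_{|N|} ] · (aq/(ρσ))^{|y|} · B_y }, where |N| = N_1+⋯+N_ℓ. Then (A',B') is also an A_ℓ-Bailey pair, i.e., B'_N = ∑_{0 ≤ y_k ≤ N_k, k=1,…,ℓ} M(N;y) A'_y for every vector N of nonnegative integers of length ℓ. -/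

import Mathlib

set_option autoImplicit false
set_option maxHeartbeats 1000000

open Finset

/-- The `q`-shifted factorial `(a; q)_n`, extended to all integers `n` by the
standard convention `(a;q)_{-m} = 1 / ∏_{k=1}^{m} (1 - a q^{-k})`. -/
noncomputable def qp (a q : ℂ) (n : ℤ) : ℂ :=
  if 0 ≤ n then ∏ k ∈ Finset.range n.toNat, (1 - a * q ^ (k : ℤ))
  else (∏ k ∈ Finset.range (-n).toNat, (1 - a * q ^ (-(k : ℤ) - 1)))⁻¹

/-- The `A_ℓ` Bailey transform matrix `M(i;j)`; `xl` denotes `x_ℓ`. -/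
noncomputable def MA (ℓ : ℕ) (q a : ℂ) (x : Fin ℓ → ℂ) (xl : ℂ)
    (i j : Fin ℓ → ℕ) : ℂ :=
  (∏ r, ∏ s,
    (qp (q * (x r / x s) * q ^ ((j r : ℤ) - (j s : ℤ))) q ((i r : ℤ) - (j r : ℤ)))⁻¹) *
  ∏ k, (qp (a * q * (x k / xl)) q ((i k : ℤ) + ∑ s, (j s : ℤ)))⁻¹

/-- The `A_ℓ` Bailey transform matrix `M*(i;j)`; `xl` denotes `x_ℓ`. -/
noncomputable def MAstar (ℓ : ℕ) (q a : ℂ) (x : Fin ℓ → ℂ) (xl : ℂ)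
    (i j : Fin ℓ → ℕ) : ℂ :=
  (∏ k, (1 - a * (x k / xl) * q ^ ((i k : ℤ) + ∑ s, (i s : ℤ)))) *
  (∏ k, qp (a * q * (x k / xl)) q ((j k : ℤ) + (∑ s, (i s : ℤ)) - 1)) *
  (∏ r, ∏ s,
    (qp (q * (x r / x s) * q ^ ((j r : ℤ) - (j s : ℤ))) q ((i r : ℤ) - (j r : ℤ)))⁻¹) *
  (-1 : ℂ) ^ ((∑ s, (i s : ℤ)) - ∑ s, (j s : ℤ)) *
  q ^ (((∑ s, (i s : ℤ)) - ∑ s, (j s : ℤ)) *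
        ((∑ s, (i s : ℤ)) - (∑ s, (j s : ℤ)) - 1) / 2)

/-!
Exchanging the two sums reduces Bailey's lemma to a closed form for the sum of
`baileyKernel N y * baileyMatrix y m` over `m ≤ y ≤ N`, which is Milne's `A_ℓ` `q`-Pfaff–Saalschütz
summation. Put `k = y - m`, `c = (a q / σ) q ^ |m|`, and let a variable `v` stand for `a q / (ρ σ)`.
The powers `v ^ |k|` and the factorials `(ρ q ^ |m|; q)_|k|`, where `ρ q ^ |m| = c / v`, combine to
`(v - c)(v - c q)⋯(v - c q ^ (|k| - 1))`, so both sides of the summation become polynomials in `v`.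
At `v = c` only the summand `k = 0` survives. Both sides moreover satisfy the same first-order
`q`-difference equation, so they agree at every `c q ^ j`, hence identically.

The closed form satisfies that equation visibly. For the sum, the difference of the two sides of
the equation is, summand by summand, the outflow minus the inflow at the node `k` of a flow on the
lattice with edges `k → k + e_i`; the decomposition into flows along the edges is a partial fraction
expansion, and the total is zero because no flow crosses the boundary of the box of summation.
-/

section QPochhammer

variable {R : Type*} [CommRing R]

/-- The `q`-shifted factorial `(a; q)_n` with natural number index, over any commutative ring, so
that it can also be formed in a polynomial ring. -/
def qPoch (a q : R) (n : ℕ) : R :=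
  ∏ i ∈ range n, (1 - a * q ^ i)

@[simp]
lemma qPoch_zero (a q : R) : qPoch a q 0 = 1 :=
  prod_range_zero _

lemma qPoch_succ (a q : R) (n : ℕ) : qPoch a q (n + 1) = qPoch a q n * (1 - a * q ^ n) :=
  prod_range_succ _ _

lemma qPoch_add (a q : R) (m n : ℕ) :
    qPoch a q (m + n) = qPoch a q m * qPoch (a * q ^ m) q n := by
  simp only [qPoch, prod_range_add, pow_add, mul_assoc]

lemma qPoch_succ' (a q : R) (n : ℕ) : qPoch a q (n + 1) = (1 - a) * qPoch (a * q) q n := by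
  rw [add_comm, qPoch_add, pow_one, qPoch_succ, qPoch_zero, pow_zero, mul_one, one_mul]

lemma map_qPoch {S : Type*} [CommRing S] (f : R →+* S) (a q : R) (n : ℕ) :
    f (qPoch a q n) = qPoch (f a) (f q) n := by
  simp only [qPoch, map_prod, map_sub, map_one, map_mul, map_pow]

/-- Gauss's `q`-analogue `(v - c)(v - cq)⋯(v - cq^(n-1))` of the power `(v - c)^n`. Unlike
`v ^ n * qPoch (c / v) q n`, it is polynomial in `v`. -/
def gaussPow (c q v : R) (n : ℕ) : R :=
  ∏ i ∈ range n, (v - c * q ^ i)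

@[simp]
lemma gaussPow_zero (c q v : R) : gaussPow c q v 0 = 1 :=
  prod_range_zero _

lemma gaussPow_succ (c q v : R) (n : ℕ) :
    gaussPow c q v (n + 1) = gaussPow c q v n * (v - c * q ^ n) :=
  prod_range_succ _ _

lemma gaussPow_succ_mul_left (c q v : R) (n : ℕ) :
    gaussPow c q (q * v) (n + 1) = gaussPow c q v n * (q ^ n * (q * v - c)) := by
  have hscale (i : ℕ) : q * v - c * q ^ (i + 1) = q * (v - c * q ^ i) := by ring
  simp only [gaussPow, prod_range_succ', hscale, prod_mul_distrib, prod_const, card_range]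
  ring

lemma gaussPow_self (c q : R) {n : ℕ} (hn : n ≠ 0) : gaussPow c q c n = 0 :=
  prod_eq_zero (mem_range.2 (Nat.pos_of_ne_zero hn)) (by ring)

lemma gaussPow_mul_self (v w q : R) (n : ℕ) : gaussPow (v * w) q v n = v ^ n * qPoch w q n := by
  have hscale (i : ℕ) : v - v * w * q ^ i = v * (1 - w * q ^ i) := by ring
  simp only [gaussPow, qPoch, hscale, prod_mul_distrib, prod_const, card_range]

lemma map_gaussPow {S : Type*} [CommRing S] (f : R →+* S) (c q v : R) (n : ℕ) :
    f (gaussPow c q v n) = gaussPow (f c) (f q) (f v) n := by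
  simp only [gaussPow, map_prod, map_sub, map_mul, map_pow]

end QPochhammer

section PartialFractions

open Polynomial

variable {K : Type*} [Field K] {ι : Type*} [Fintype ι]

lemma natDegree_prod_one_sub_le (U : ι → K) :
    (∏ r, (1 - X * C (U r))).natDegree ≤ Fintype.card ι := by
  refine (natDegree_prod_le _ _).trans ((sum_le_card_nsmul _ _ 1 fun r _ => ?_).trans (by simp))
  compute_degree

lemma coeff_prod_one_sub (U : ι → K) :
    (∏ r, (1 - X * C (U r))).coeff (Fintype.card ι) = (-1) ^ Fintype.card ι * ∏ r, U r := by
  have hcoeff := coeff_prod_of_natDegree_le univ (fun r => 1 - X * C (U r)) 1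
    fun r _ => by compute_degree
  rw [mul_one, card_univ] at hcoeff
  have hcoeff_one (r : ι) : (1 - X * C (U r)).coeff 1 = -U r := by
    rw [coeff_sub, coeff_X_mul, coeff_C_zero, coeff_one, if_neg one_ne_zero, zero_sub]
  rw [hcoeff, prod_congr rfl fun r _ => hcoeff_one r, prod_neg, card_univ]

lemma natDegree_add_le_card_of_leading_cancel {Y V : ι → K} {α β δ : K}
    (h : β * ∏ r, Y r + δ * ∏ r, V r = 0) :
    ((C α + C β * X) * ∏ r, (1 - X * C (Y r)) +
      (C δ * X - C α) * ∏ r, (1 - X * C (V r))).natDegree ≤ Fintype.card ι := by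
  have hβ : (C α + C β * X).natDegree ≤ 1 := by compute_degree
  have hδ : (C δ * X - C α).natDegree ≤ 1 := by compute_degree
  have hY := natDegree_prod_one_sub_le Y
  have hV := natDegree_prod_one_sub_le V
  refine natDegree_le_iff_coeff_eq_zero.2 fun m hm => ?_
  obtain hm | rfl := (Nat.add_one_le_of_lt hm).lt_or_eq
  · rw [add_comm] at hm
    exact coeff_eq_zero_of_natDegree_lt <| (natDegree_add_le_of_degree_le
      (natDegree_mul_le_of_le hβ hY) (natDegree_mul_le_of_le hδ hV)).trans_lt hm
  · rw [coeff_add, add_comm _ 1, coeff_mul_add_eq_of_natDegree_le hβ hY,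
      coeff_mul_add_eq_of_natDegree_le hδ hV, coeff_prod_one_sub, coeff_prod_one_sub]
    simp only [coeff_add, coeff_sub, coeff_C_succ, coeff_C_mul, coeff_X_one]
    linear_combination (-1) ^ Fintype.card ι * h

variable [DecidableEq ι]

lemma eval_eq_sum_of_eval_zero {f : K[X]} (hdeg : f.natDegree ≤ Fintype.card ι)
    (h0 : f.eval 0 = 0) {Y : ι → K} (hY : ∀ i, Y i ≠ 0) (hinj : Function.Injective Y) (v : K) :
    f.eval v =
      ∑ i, v * Y i * f.eval (Y i)⁻¹ * ∏ r ∈ univ.erase i, (1 - v * Y r) / (1 - Y r / Y i) := by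
  have hf : f = X * f.divX := by
    conv_lhs => rw [← X_mul_divX_add f, coeff_zero_eq_eval_zero, h0, C_0, add_zero]
  have hdivX : f.divX.degree < #(univ : Finset ι) := by
    rcases eq_or_ne f 0 with rfl | hne
    · simp
    · exact (degree_divX_lt hne).trans_le (degree_le_of_natDegree_le hdeg)
  have hbasis (i r : ι) (hr : r ∈ univ.erase i) :
      ((Y i)⁻¹ - (Y r)⁻¹)⁻¹ * (v - (Y r)⁻¹) = (1 - v * Y r) / (1 - Y r / Y i) := by
    have := sub_ne_zero.2 (hinj.ne (ne_of_mem_erase hr).symm)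
    have := hY i
    have := hY r
    have hr' : (Y i)⁻¹ - (Y r)⁻¹ = -(Y r)⁻¹ * (1 - Y r / Y i) := by field_simp; ring
    have hv : v - (Y r)⁻¹ = -(Y r)⁻¹ * (1 - v * Y r) := by field_simp; ring
    rw [hr', hv, ← div_eq_inv_mul, mul_div_mul_left _ _ (neg_ne_zero.2 (inv_ne_zero (hY r)))]
  have hlagrange := congrArg (eval v) <| Lagrange.eq_interpolate (v := fun i => (Y i)⁻¹)
    ((inv_injective.comp hinj).injOn) hdivX
  rw [hf, eval_mul, eval_X, hlagrange, Lagrange.interpolate_apply, eval_finsetSum, mul_sum]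
  refine sum_congr rfl fun i _ => ?_
  simp only [eval_mul, eval_C, eval_X, Lagrange.basis, eval_prod, Lagrange.basisDivisor, eval_sub]
  rw [prod_congr rfl (hbasis i), mul_assoc v, mul_inv_cancel_left₀ (hY i), mul_assoc]

/-- The coefficient of `1 / (t - Y i)` in the partial fraction expansion of
`∏ r, (t - V r) / ∏ r, (t - Y r)`. -/
def residue (Y V : ι → K) (i : ι) : K :=
  (∏ r, (Y i - V r)) / ∏ r ∈ univ.erase i, (Y i - Y r)

lemma residue_eq_zero {Y V : ι → K} {i : ι} (h : Y i = V i) : residue Y V i = 0 := by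
  rw [residue, prod_eq_zero (mem_univ i) (sub_eq_zero.2 h), zero_div]

lemma mul_prod_div_eq_residue {Y : ι → K} (V : ι → K) {i : ι} (hi : Y i ≠ 0) :
    Y i * ((∏ r, (1 - V r / Y i)) / ∏ r ∈ univ.erase i, (1 - Y r / Y i)) = residue Y V i := by
  have hscale (t : K) : 1 - t / Y i = (Y i)⁻¹ * (Y i - t) := by field_simp
  have hpow : (Y i)⁻¹ ^ #(univ : Finset ι) = (Y i)⁻¹ * (Y i)⁻¹ ^ #(univ.erase i) := by
    rw [← pow_succ', card_erase_add_one (mem_univ i)]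
  simp only [residue, hscale, prod_mul_distrib, prod_const, hpow]
  have : (Y i)⁻¹ ^ #(univ.erase i) ≠ 0 := pow_ne_zero _ (inv_ne_zero hi)
  rw [mul_assoc (Y i)⁻¹, mul_div_assoc, mul_inv_cancel_left₀ hi, mul_div_mul_left _ _ this]

theorem sum_residue_mul_prod_erase {Y V : ι → K} (hY : ∀ i, Y i ≠ 0)
    (hinj : Function.Injective Y) {α β δ : K} (h : β * ∏ r, Y r + δ * ∏ r, V r = 0) (v : K) :
    ∑ i, v * (δ / Y i - α) * residue Y V i * ∏ r ∈ univ.erase i, (1 - v * Y r) =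
      (α + β * v) * ∏ r, (1 - v * Y r) + (δ * v - α) * ∏ r, (1 - v * V r) := by
  have heval := eval_eq_sum_of_eval_zero (natDegree_add_le_card_of_leading_cancel (α := α) h)
    (by simp [eval_prod]) hY hinj v
  simp only [eval_add, eval_sub, eval_mul, eval_prod,
    eval_C, eval_X, eval_one] at heval
  rw [heval]
  refine sum_congr rfl fun i _ => ?_
  have hroot : ∏ r, (1 - (Y i)⁻¹ * Y r) = 0 :=
    prod_eq_zero (mem_univ i) (by rw [inv_mul_cancel₀ (hY i), sub_self])
  rw [hroot, ← mul_prod_div_eq_residue V (hY i), prod_div_distrib]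
  simp only [inv_mul_eq_div]
  ring

end PartialFractions

section Generic

variable {K : Type*} [Field K] {ι : Type*}

/-- The points `z i * q ^ k i`, for exponents `k i` that depend on the index. -/
def qShift (q : K) (z : ι → K) (k : ι → ℕ) : ι → K :=
  fun i => z i * q ^ k i

lemma qShift_zero (q : K) (z : ι → K) : qShift q z 0 = z :=
  funext fun i => by rw [qShift, Pi.zero_apply, pow_zero, mul_one]

lemma qShift_add (q : K) (z : ι → K) (k m : ι → ℕ) :
    qShift q z (k + m) = qShift q (qShift q z k) m :=
  funext fun i => by rw [qShift, qShift, qShift, Pi.add_apply, pow_add, mul_assoc]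

lemma qShift_const_mul (q t : K) (z : ι → K) (k : ι → ℕ) :
    qShift q (fun i => t * z i) k = fun i => t * qShift q z k i :=
  funext fun i => mul_assoc t (z i) _

lemma qShift_add_single [DecidableEq ι] (q : K) (z : ι → K) (k : ι → ℕ) (i : ι) :
    qShift q z (k + Pi.single i 1) = Function.update (qShift q z k) i (q * qShift q z k i) := by
  ext r
  obtain rfl | hr := eq_or_ne r i
  · rw [Function.update_self, qShift_add, qShift, Pi.single_eq_same, pow_one, mul_comm]
  · rw [Function.update_of_ne hr, qShift_add, qShift, Pi.single_eq_of_ne hr, pow_zero, mul_one]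

lemma prod_qShift [Fintype ι] (q : K) (z : ι → K) (k : ι → ℕ) :
    ∏ i, qShift q z k i = (∏ i, z i) * q ^ ∑ i, k i := by
  simp only [qShift, prod_mul_distrib, prod_pow_eq_pow_sum]

/-- The elements `z i * q ^ a` are pairwise distinct. For a nonempty index type this makes `q` and
the `z i` nonzero and `q` not a root of unity. -/
def QGeneric (q : K) (z : ι → K) : Prop :=
  Function.Injective fun p : ι × ℕ => z p.1 * q ^ p.2

namespace QGeneric

variable {q : K} {z : ι → K}

lemma ne_zero (h : QGeneric q z) (i : ι) : z i ≠ 0 := fun hz => by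
  simpa using @h (i, 0) (i, 1) (by simp [hz])

lemma pow_injective [Nonempty ι] (h : QGeneric q z) : Function.Injective fun m : ℕ => q ^ m := by
  obtain ⟨i⟩ := ‹Nonempty ι›
  intro m n hmn
  simpa using @h (i, m) (i, n) (congrArg (z i * ·) hmn)

lemma base_ne_zero [Nonempty ι] (h : QGeneric q z) : q ≠ 0 := fun hq => by
  simpa using h.pow_injective (a₁ := 1) (a₂ := 2) (by simp [hq])

lemma injective (h : QGeneric q z) : Function.Injective z := fun i j hij => by
  simpa using @h (i, 0) (j, 0) (by simp [hij])

protected lemma qShift (h : QGeneric q z) (k : ι → ℕ) : QGeneric q (qShift q z k) := by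
  intro ⟨i, m⟩ ⟨j, n⟩ hmn
  simp only [qShift, mul_assoc, ← pow_add] at hmn
  obtain ⟨rfl, hkmn⟩ := Prod.mk.inj (h hmn : (i, k i + m) = (j, k j + n))
  rw [Nat.add_left_cancel hkmn]

lemma const_mul (h : QGeneric q z) {t : K} (ht : t ≠ 0) : QGeneric q fun i => t * z i := by
  intro p p' hp
  simp only [mul_assoc] at hp
  exact h (mul_left_cancel₀ ht hp)

end QGeneric

end Generic

lemma prod_mul_eq_prod_mul_of_ne {M ι : Type*} [CommMonoid M] [Fintype ι] {f g : ι → M}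
    {a b : M} (i : ι) (hne : ∀ r ≠ i, f r = g r) (hi : f i * a = g i * b) :
    (∏ r, f r) * a = (∏ r, g r) * b := by
  classical
  rw [← prod_erase_mul univ f (mem_univ i), ← prod_erase_mul univ g (mem_univ i), mul_assoc, hi,
    prod_congr rfl fun r hr => hne r (ne_of_mem_erase hr), mul_assoc]

section CrossPochhammer

variable {K : Type*} [Field K] {ι : Type*} [Fintype ι]

/-- The double product `∏ r, ∏ s, (q y_r / w_s; q)_{m_r}`, the denominator of the `A_ℓ` kernels. -/
def crossPoch (q : K) (y w : ι → K) (m : ι → ℕ) : K :=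
  ∏ r, ∏ s, qPoch (q * (y r / w s)) q (m r)

lemma crossPoch_zero (q : K) (y w : ι → K) : crossPoch q y w 0 = 1 := by
  simp only [crossPoch, Pi.zero_apply, qPoch_zero, prod_const_one]

lemma crossPoch_const_mul {t : K} (ht : t ≠ 0) (q : K) (y w : ι → K) (m : ι → ℕ) :
    crossPoch q (fun i => t * y i) (fun i => t * w i) m = crossPoch q y w m := by
  simp only [crossPoch, mul_div_mul_left _ _ ht]

lemma QGeneric.crossPoch_ne_zero {q : K} {z : ι → K} (h : QGeneric q z) (m : ι → ℕ) :
    crossPoch q z z m ≠ 0 := by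
  simp only [crossPoch, qPoch, prod_ne_zero_iff, sub_ne_zero]
  intro r _ s _ i _ hone
  have hs := h.ne_zero s
  have heq : z r * q ^ (i + 1) = z s * q ^ 0 := by
    field_simp at hone
    rw [pow_zero, mul_one, hone]
    ring
  simpa using congrArg Prod.snd (@h (r, i + 1) (s, 0) heq)

lemma qGeneric_of_crossPoch_ne_zero {q : K} {z : ι → K} (hq : q ≠ 0) (hz : ∀ i, z i ≠ 0)
    (h : ∀ k m, crossPoch q (qShift q z k) (qShift q z k) m ≠ 0) : QGeneric q z := by
  classical
  have hfactor (k : ι → ℕ) (r s : ι) (t : ℕ) :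
      q * (qShift q z k r / qShift q z k s) * q ^ t ≠ 1 := by
    have hcross := h k fun _ => t + 1
    simp only [crossPoch, qPoch_succ, prod_ne_zero_iff] at hcross
    exact fun h1 => right_ne_zero_of_mul (hcross r (mem_univ r) s (mem_univ s))
      (sub_eq_zero.2 h1.symm)
  rintro ⟨r, m⟩ ⟨s, n⟩ (hrs : z r * q ^ m = z s * q ^ n)
  wlog hmn : m ≤ n generalizing r s m n
  · exact (this s n r m hrs.symm (le_of_not_ge hmn)).symm
  have hr := hz r
  have hs := hz s
  obtain rfl | hlt := hmn.eq_or_lt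
  · have hzrs := mul_right_cancel₀ (pow_ne_zero m hq) hrs
    by_contra hne
    refine hfactor (Pi.single s 1) r s 0 ?_
    have hrs' : r ≠ s := fun h => hne (by rw [h])
    rw [qShift, qShift, Pi.single_eq_same, Pi.single_eq_of_ne hrs', hzrs]
    field_simp
  · obtain ⟨t, rfl⟩ := Nat.exists_eq_add_of_lt hlt
    refine absurd ?_ (hfactor 0 s r t)
    rw [qShift_zero]
    field_simp
    refine mul_right_cancel₀ (pow_ne_zero m hq) ?_
    rw [hrs]
    ring

variable [DecidableEq ι]

lemma crossPoch_add_single (q : K) (y w : ι → K) (m : ι → ℕ) (i : ι) :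
    crossPoch q y w (m + Pi.single i 1) =
      crossPoch q y w m * ∏ s, (1 - q * (qShift q y m i / w s)) := by
  rw [← mul_one (crossPoch q y w (m + Pi.single i 1))]
  refine prod_mul_eq_prod_mul_of_ne i (fun r hr => ?_) ?_
  · rw [Pi.add_apply, Pi.single_eq_of_ne hr, add_zero]
  · rw [Pi.add_apply, Pi.single_eq_same, mul_one, ← prod_mul_distrib]
    refine prod_congr rfl fun s _ => ?_
    rw [qPoch_succ, qShift]
    ring

lemma crossPoch_add_single_eq_update (q : K) (y w : ι → K) (m : ι → ℕ) (i : ι) :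
    crossPoch q y w (m + Pi.single i 1) =
      crossPoch q (Function.update y i (q * y i)) w m * ∏ s, (1 - q * (y i / w s)) := by
  rw [← mul_one (crossPoch q y w (m + Pi.single i 1))]
  refine prod_mul_eq_prod_mul_of_ne i (fun r hr => ?_) ?_
  · rw [Pi.add_apply, Pi.single_eq_of_ne hr, add_zero, Function.update_of_ne hr]
  · rw [Pi.add_apply, Pi.single_eq_same, mul_one, Function.update_self, ← prod_mul_distrib]
    refine prod_congr rfl fun s _ => ?_
    rw [qPoch_succ', mul_comm, mul_div_assoc, mul_comm _ q]

lemma crossPoch_update_right {q : K} (hq : q ≠ 0) (y w : ι → K) (m : ι → ℕ) (i : ι) :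
    crossPoch q y (Function.update w i (q * w i)) m * ∏ r, (1 - qShift q y m r / w i) =
      crossPoch q y w m * ∏ r, (1 - y r / w i) := by
  simp only [crossPoch, ← prod_mul_distrib]
  refine prod_congr rfl fun r _ => prod_mul_eq_prod_mul_of_ne i (fun s hs => ?_) ?_
  · rw [Function.update_of_ne hs]
  · have hcancel : q * (y r / (q * w i)) = y r / w i := by
      rw [← mul_div_assoc, mul_div_mul_left _ _ hq]
    rw [Function.update_self, hcancel, qShift, mul_div_right_comm, ← qPoch_succ, qPoch_succ',
      mul_comm, mul_comm _ q]

end CrossPochhammer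

section KernelRatio

variable {K : Type*} [Field K] {ι : Type*} [Fintype ι] [DecidableEq ι]

lemma prod_one_sub_div_mul_prod {Y Z : ι → K} (i : ι) (hY : ∀ r, Y r ≠ 0) (hZ : ∀ r, Z r ≠ 0)
    (hne : ∀ r ≠ i, Y i ≠ Y r) :
    (∏ s, (1 - Y i / Z s)) * ∏ s, Z s =
      -(residue Y Z i * (∏ r ∈ univ.erase i, Y r) * ∏ r ∈ univ.erase i, (1 - Y i / Y r)) := by
  have hclear {U : ι → K} (hU : ∀ r, U r ≠ 0) (s : Finset ι) :
      (∏ r ∈ s, (1 - Y i / U r)) * ∏ r ∈ s, U r = (-1) ^ #s * ∏ r ∈ s, (Y i - U r) := by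
    rw [← prod_mul_distrib, ← prod_neg]
    refine prod_congr rfl fun r _ => ?_
    rw [sub_mul, div_mul_cancel₀ _ (hU r), one_mul, neg_sub]
  have hden : ∏ r ∈ univ.erase i, (Y i - Y r) ≠ 0 :=
    prod_ne_zero_iff.2 fun r hr => sub_ne_zero.2 (hne r (ne_of_mem_erase hr))
  rw [hclear hZ, mul_assoc (residue Y Z i), mul_comm (∏ r ∈ univ.erase i, Y r), hclear hY, residue,
    ← card_erase_add_one (mem_univ i), pow_succ]
  field_simp

lemma crossPoch_update_update {q : K} (hq : q ≠ 0) {y y' : ι → K} {i : ι}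
    (hy' : y' = Function.update y i (q * y i)) (m : ι → ℕ) :
    crossPoch q y' y' m * (∏ r, (1 - qShift q y' m r / y i)) * ∏ s, (1 - q * (y i / y s)) =
      crossPoch q y y (m + Pi.single i 1) * ∏ r, (1 - y' r / y i) := by
  subst hy'
  rw [crossPoch_update_right hq, crossPoch_add_single_eq_update, mul_right_comm]

lemma crossPoch_mul_residue [Nonempty ι] {q : K} {y y' : ι → K} (h : QGeneric q y) {i : ι}
    (hy' : y' = Function.update y i (q * y i)) (m : ι → ℕ) :
    crossPoch q y' y' m * residue y (qShift q y' m) i * ∏ r ∈ univ.erase i, (1 - y' i / y' r) =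
      y i * crossPoch q y y (m + Pi.single i 1) := by
  have hy := h.ne_zero i
  have hself : y' i = q * y i := by rw [hy', Function.update_self]
  have hne (r : ι) (hr : r ∈ univ.erase i) : y' r = y r := by
    rw [hy', Function.update_of_ne (ne_of_mem_erase hr)]
  have hq1 : 1 - q ≠ 0 := sub_ne_zero.2 (by simpa using h.pow_injective.ne zero_ne_one)
  have hden : ∏ r ∈ univ.erase i, (1 - y r / y i) ≠ 0 :=
    prod_ne_zero_iff.2 fun r hr => sub_ne_zero.2 fun h1 =>
      ne_of_mem_erase hr (h.injective (eq_of_div_eq_one h1.symm))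
  have hrow : ∏ s, (1 - q * (y i / y s)) =
      (1 - q) * ∏ r ∈ univ.erase i, (1 - y' i / y' r) := by
    rw [← mul_prod_erase univ _ (mem_univ i), div_self hy, mul_one]
    refine congrArg _ (prod_congr rfl fun r hr => ?_)
    rw [hself, hne r hr, mul_div_assoc]
  have hcol : ∏ r, (1 - y' r / y i) = (1 - q) * ∏ r ∈ univ.erase i, (1 - y r / y i) := by
    rw [← mul_prod_erase univ _ (mem_univ i), hself, mul_div_cancel_right₀ _ hy]
    exact congrArg _ (prod_congr rfl fun r hr => by rw [hne r hr])
  have hstep := crossPoch_update_update h.base_ne_zero hy' m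
  rw [hrow, hcol] at hstep
  have hresidue : residue y (qShift q y' m) i * ∏ r ∈ univ.erase i, (1 - y r / y i) =
      y i * ∏ r, (1 - qShift q y' m r / y i) := by
    rw [← mul_prod_div_eq_residue _ hy, mul_assoc, div_mul_cancel₀ _ hden]
  refine mul_right_cancel₀ (mul_ne_zero hq1 hden) ?_
  linear_combination (1 - q) * crossPoch q y' y' m * (∏ r ∈ univ.erase i, (1 - y' i / y' r)) *
    hresidue + y i * hstep

lemma mul_crossPoch_add_single {q : K} {z : ι → K} (h : QGeneric q z) (k : ι → ℕ) {y' : ι → K}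
    {i : ι} (hy' : y' = qShift q z (k + Pi.single i 1)) :
    qShift q z k i * crossPoch q z z (k + Pi.single i 1) =
      -(q ^ ∑ r, k r) * residue y' z i * (∏ r ∈ univ.erase i, (1 - y' i / y' r)) *
        crossPoch q z z k := by
  have hz : ∏ r, z r ≠ 0 := prod_ne_zero_iff.2 fun r _ => h.ne_zero r
  have hgen : QGeneric q y' := hy' ▸ h.qShift _
  have hupdate := hy'.trans (qShift_add_single q z k i)
  have hprod : qShift q z k i * ∏ r ∈ univ.erase i, y' r = (∏ r, z r) * q ^ ∑ r, k r := by
    rw [← prod_qShift, ← mul_prod_erase univ _ (mem_univ i), hupdate]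
    exact congrArg _ (prod_congr rfl fun r hr => Function.update_of_ne (ne_of_mem_erase hr) ..)
  have hrow : ∏ s, (1 - q * (qShift q z k i / z s)) = ∏ s, (1 - y' i / z s) := by
    simp only [hupdate, Function.update_self, mul_div_assoc]
  have hresidue := prod_one_sub_div_mul_prod i hgen.ne_zero h.ne_zero
    fun r hr => hgen.injective.ne hr.symm
  rw [crossPoch_add_single, hrow]
  refine mul_right_cancel₀ hz ?_
  linear_combination qShift q z k i * crossPoch q z z k * hresidue -
    residue y' z i * (∏ r ∈ univ.erase i, (1 - y' i / y' r)) * crossPoch q z z k * hprod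

/-- The product of the denominators of the two kernels in the summand with index `k` of the
`A_ℓ` summation, with `m` standing for `n - k`. -/
def kernelDenom (q : K) (z : ι → K) (k m : ι → ℕ) : K :=
  crossPoch q (qShift q z k) (qShift q z k) m * crossPoch q z z k

omit [DecidableEq ι] in
lemma kernelDenom_ne_zero {q : K} {z : ι → K} (h : QGeneric q z) (k m : ι → ℕ) :
    kernelDenom q z k m ≠ 0 :=
  mul_ne_zero ((h.qShift k).crossPoch_ne_zero m) (h.crossPoch_ne_zero k)

omit [DecidableEq ι] in
lemma kernelDenom_const_mul {t : K} (ht : t ≠ 0) (q : K) (z : ι → K) (k m : ι → ℕ) :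
    kernelDenom q (fun i => t * z i) k m = kernelDenom q z k m := by
  rw [kernelDenom, qShift_const_mul, crossPoch_const_mul ht, crossPoch_const_mul ht, kernelDenom]

/-- The relation between consecutive summands that makes the `A_ℓ` summation telescope. -/
lemma kernelDenom_mul_residue [Nonempty ι] {q : K} {z : ι → K} (h : QGeneric q z) (k m : ι → ℕ)
    (i : ι) :
    kernelDenom q z (k + Pi.single i 1) m *
        residue (qShift q z k) (qShift q z (k + Pi.single i 1 + m)) i =
      -(q ^ ∑ r, k r) * kernelDenom q z k (m + Pi.single i 1) *
        residue (qShift q z (k + Pi.single i 1)) z i := by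
  rw [kernelDenom, kernelDenom, qShift_add q z (k + Pi.single i 1) m]
  generalize hy' : qShift q z (k + Pi.single i 1) = y'
  have hgen : QGeneric q y' := hy' ▸ h.qShift _
  have hden : ∏ r ∈ univ.erase i, (1 - y' i / y' r) ≠ 0 :=
    prod_ne_zero_iff.2 fun r hr => sub_ne_zero.2 fun h1 =>
      (ne_of_mem_erase hr).symm (hgen.injective (eq_of_div_eq_one h1.symm))
  have hleft := crossPoch_mul_residue (h.qShift k) (hy'.symm.trans (qShift_add_single ..)) m
  have hright := mul_crossPoch_add_single h k hy'.symm
  refine mul_right_cancel₀ hden ?_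
  linear_combination crossPoch q z z (k + Pi.single i 1) * hleft +
    crossPoch q (qShift q z k) (qShift q z k) (m + Pi.single i 1) * hright

end KernelRatio

section Telescoping

lemma sum_Icc_eq_sum_Icc_of_shift {ι M : Type*} [Fintype ι] [DecidableEq ι] [AddCommMonoid M]
    {n : ι → ℕ} {i : ι} {G H : (ι → ℕ) → M} (hG : ∀ k, k i = n i → G k = 0)
    (hH : ∀ k, k i = 0 → H k = 0) (hGH : ∀ k, k + Pi.single i 1 ≤ n → G k = H (k + Pi.single i 1)) :
    ∑ k ∈ Icc 0 n, G k = ∑ k ∈ Icc 0 n, H k := by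
  have hle {k : ι → ℕ} (hk : k ∈ Icc 0 n) (hGk : G k ≠ 0) : k + Pi.single i 1 ≤ n := fun r => by
    have hkn := (mem_Icc.1 hk).2 r
    obtain rfl | hr := eq_or_ne r i
    · simpa using lt_of_le_of_ne hkn fun h => hGk (hG k h)
    · simpa [hr] using hkn
  refine sum_bij_ne_zero (fun k _ _ => k + Pi.single i 1)
    (fun k hk hGk => mem_Icc.2 ⟨zero_le, hle hk hGk⟩) (fun _ _ _ _ _ _ => add_right_cancel)
    (fun k hk hHk => ?_) fun k hk hGk => hGH k (hle hk hGk)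
  have hki : Pi.single i 1 ≤ k := fun r => by
    obtain rfl | hr := eq_or_ne r i
    · simpa using Nat.one_le_iff_ne_zero.2 fun h => hHk (hH k h)
    · simp [hr]
  have hkn := (mem_Icc.1 hk).2
  refine ⟨k - Pi.single i 1, mem_Icc.2 ⟨zero_le, tsub_le_self.trans hkn⟩, ?_,
    tsub_add_cancel_of_le hki⟩
  rwa [hGH _ (by rwa [tsub_add_cancel_of_le hki]), tsub_add_cancel_of_le hki]

variable {K : Type*} [Field K] {ι : Type*} [Fintype ι]

/-- The factor of the `k`-th summand of `saalschutzSum` that does not depend on the variable `v`,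
with `m` standing for `n - k`. -/
def saalschutzCoeff (q c : K) (z : ι → K) (k m : ι → ℕ) : K :=
  (kernelDenom q z k m)⁻¹ * ∏ i, qPoch (z i) q (k i) * qPoch (c * qShift q z k i) q (m i)

variable [DecidableEq ι]

/-- The flow from `k` to `k + Pi.single i 1` in the telescoping of `saalschutzSum`, written in
terms of its source `k`. -/
def outflow (q c : K) (z : ι → K) (n : ι → ℕ) (v : K) (k : ι → ℕ) (i : ι) : K :=
  saalschutzCoeff q c z k (n - k) * gaussPow c q v (∑ r, k r) *
    qPoch (v * q) q (∑ r, n r - ∑ r, k r - 1) *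
    (v * (1 / qShift q z k i - 1) * residue (qShift q z k) (qShift q z n) i *
      ∏ r ∈ univ.erase i, (1 - v * qShift q z k r))

/-- The flow from `k - Pi.single i 1` to `k` in the telescoping of `saalschutzSum`, written in
terms of its target `k`. -/
def inflow (q c : K) (z : ι → K) (n : ι → ℕ) (v : K) (k : ι → ℕ) (i : ι) : K :=
  saalschutzCoeff q c z k (n - k) * gaussPow c q v (∑ r, k r - 1) *
    qPoch (v * q) q (∑ r, n r - ∑ r, k r) *
    (v * (-q ^ (∑ r, k r) / qShift q z k i + c * q ^ (∑ r, k r - 1)) * residue (qShift q z k) z i *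
      ∏ r ∈ univ.erase i, (1 - v * qShift q z k r))

variable {q c : K} {z : ι → K} {n : ι → ℕ} {v : K}

lemma saalschutzCoeff_mul_residue [Nonempty ι] (h : QGeneric q z) (k m : ι → ℕ) (i : ι) :
    saalschutzCoeff q c z k (m + Pi.single i 1) * (1 - qShift q z k i) *
        residue (qShift q z k) (qShift q z (k + Pi.single i 1 + m)) i =
      -(q ^ ∑ r, k r) * saalschutzCoeff q c z (k + Pi.single i 1) m * (1 - c * qShift q z k i) *
        residue (qShift q z (k + Pi.single i 1)) z i := by
  have hpoch : (∏ r, qPoch (z r) q (k r) *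
        qPoch (c * qShift q z k r) q ((m + Pi.single i 1 : ι → ℕ) r)) * (1 - qShift q z k i) =
      (∏ r, qPoch (z r) q ((k + Pi.single i 1 : ι → ℕ) r) *
        qPoch (c * qShift q z (k + Pi.single i 1) r) q (m r)) * (1 - c * qShift q z k i) := by
    refine prod_mul_eq_prod_mul_of_ne i (fun r hr => ?_) ?_
    · simp only [qShift_add_single, Function.update_of_ne hr, Pi.add_apply,
        Pi.single_eq_of_ne hr, add_zero]
    · rw [qShift_add_single, Function.update_self, Pi.add_apply, Pi.add_apply, Pi.single_eq_same,
        qPoch_succ (z i), qPoch_succ' (c * qShift q z k i), mul_left_comm c, mul_comm q, ← qShift]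
      ring
  have hdenom := kernelDenom_mul_residue h k m i
  have hD := kernelDenom_ne_zero h k (m + Pi.single i 1)
  have hD' := kernelDenom_ne_zero h (k + Pi.single i 1) m
  rw [saalschutzCoeff, saalschutzCoeff, mul_assoc _ _ (1 - _), hpoch]
  field_simp
  linear_combination (∏ r, qPoch (z r) q ((k + Pi.single i 1 : ι → ℕ) r) *
    qPoch (c * qShift q z (k + Pi.single i 1) r) q (m r)) * (1 - c * qShift q z k i) * hdenom

lemma outflow_eq_inflow [Nonempty ι] (h : QGeneric q z) {k : ι → ℕ} {i : ι}
    (hk : k + Pi.single i 1 ≤ n) :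
    outflow q c z n v k i = inflow q c z n v (k + Pi.single i 1) i := by
  obtain ⟨m, rfl⟩ := exists_add_of_le hk
  have hq := h.base_ne_zero
  have hy := (h.qShift k).ne_zero i
  have hsub : k + Pi.single i 1 + m - k = m + Pi.single i 1 := by
    rw [add_assoc, add_tsub_cancel_left, add_comm]
  have hsum : ∑ r, (k + Pi.single i 1 : ι → ℕ) r = ∑ r, k r + 1 := by
    simp only [Pi.add_apply, sum_add_distrib, sum_pi_single', mem_univ, if_true]
  have herase : ∏ r ∈ univ.erase i, (1 - v * qShift q z (k + Pi.single i 1) r) =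
      ∏ r ∈ univ.erase i, (1 - v * qShift q z k r) :=
    prod_congr rfl fun r hr => by
      rw [qShift_add_single, Function.update_of_ne (ne_of_mem_erase hr)]
  have hself : qShift q z (k + Pi.single i 1) i = q * qShift q z k i := by
    rw [qShift_add_single, Function.update_self]
  have hratio := saalschutzCoeff_mul_residue (c := c) h k m i
  rw [outflow, inflow, hsum, herase, hself, hsub, add_tsub_cancel_left, Nat.add_sub_cancel,
    Nat.sub_sub]
  generalize ∏ r ∈ univ.erase i, (1 - v * qShift q z k r) = P
  field_simp
  linear_combination gaussPow c q v (∑ r, k r) * P * v * q *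
    qPoch (v * q) q (∑ r, (k + Pi.single i 1 + m : ι → ℕ) r - (∑ r, k r + 1)) * hratio

lemma outflow_eq_zero {k : ι → ℕ} {i : ι} (hk : k i = n i) : outflow q c z n v k i = 0 := by
  rw [outflow, residue_eq_zero (by rw [qShift, qShift, hk])]
  ring

lemma inflow_eq_zero {k : ι → ℕ} {i : ι} (hk : k i = 0) : inflow q c z n v k i = 0 := by
  rw [inflow, residue_eq_zero (by rw [qShift, hk, pow_zero, mul_one])]
  ring

lemma sum_outflow [Nonempty ι] (h : QGeneric q z) {k : ι → ℕ} (hk : k ≤ n) :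
    ∑ i, outflow q c z n v k i =
      saalschutzCoeff q c z k (n - k) * gaussPow c q v (∑ r, k r) *
        (qPoch (v * q) q (∑ r, n r - ∑ r, k r) * ∏ r, (1 - v * qShift q z k r) -
          qPoch v q (∑ r, n r - ∑ r, k r) * ∏ r, (1 - v * qShift q z n r)) := by
  obtain rfl | hlt := hk.eq_or_lt
  · simp [outflow_eq_zero]
  obtain ⟨d, hd⟩ : ∃ d, ∑ r, n r = ∑ r, k r + d + 1 :=
    Nat.exists_eq_add_of_lt (Fintype.sum_strictMono hlt)
  have hsub : ∑ r, n r - ∑ r, k r = d + 1 := by omega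
  have hresidues := sum_residue_mul_prod_erase (h.qShift k).ne_zero (h.qShift k).injective
    (V := qShift q z n) (α := 1) (β := -q ^ (d + 1)) (δ := 1)
    (by rw [prod_qShift, prod_qShift, hd]; ring) v
  simp only [outflow, ← mul_sum]
  rw [hresidues, hsub, Nat.add_sub_cancel, qPoch_succ (v * q), qPoch_succ' v]
  ring

lemma sum_inflow [Nonempty ι] (h : QGeneric q z) (k : ι → ℕ) :
    ∑ i, inflow q c z n v k i =
      saalschutzCoeff q c z k (n - k) * qPoch (v * q) q (∑ r, n r - ∑ r, k r) *
        (gaussPow c q v (∑ r, k r) * ∏ r, (1 - v * qShift q z k r) -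
          gaussPow c q (q * v) (∑ r, k r) * ∏ r, (1 - v * z r)) := by
  obtain rfl | hne := eq_or_ne k 0
  · simp [inflow_eq_zero, qShift_zero]
  obtain ⟨j, hj⟩ := Nat.exists_eq_add_one_of_ne_zero fun h0 : ∑ r, k r = 0 =>
    hne (funext fun r => sum_eq_zero_iff.1 h0 r (mem_univ r))
  have hresidues := sum_residue_mul_prod_erase (h.qShift k).ne_zero (h.qShift k).injective
    (V := z) (α := -(c * q ^ j)) (β := 1) (δ := -q ^ (j + 1))
    (by rw [prod_qShift, hj]; ring) v
  simp only [inflow, ← mul_sum]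
  simp only [sub_neg_eq_add] at hresidues
  rw [hj, Nat.add_sub_cancel, hresidues, gaussPow_succ, gaussPow_succ_mul_left]
  ring

end Telescoping

section Saalschutz

variable {K : Type*} [Field K] {ι : Type*} [Fintype ι] [DecidableEq ι]

/-- The terminating series in Milne's `A_ℓ` `q`-Pfaff–Saalschütz summation. -/
def saalschutzSum (q c : K) (z : ι → K) (n : ι → ℕ) (v : K) : K :=
  ∑ k ∈ Icc 0 n, saalschutzCoeff q c z k (n - k) *
    (qPoch v q (∑ i, n i - ∑ i, k i) * gaussPow c q v (∑ i, k i))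

/-- The closed form of `saalschutzSum`. -/
def saalschutzProd (q c : K) (z : ι → K) (n : ι → ℕ) (v : K) : K :=
  (crossPoch q z z n)⁻¹ * qPoch c q (∑ i, n i) * ∏ i, qPoch (v * z i) q (n i)

variable {q c : K} {z : ι → K}

theorem saalschutzSum_base_mul [Nonempty ι] (h : QGeneric q z) (n : ι → ℕ) (v : K) :
    saalschutzSum q c z n (q * v) * ∏ r, (1 - v * z r) =
      saalschutzSum q c z n v * ∏ r, (1 - v * qShift q z n r) := by
  have hflow : ∑ k ∈ Icc 0 n, ∑ i, outflow q c z n v k i =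
      ∑ k ∈ Icc 0 n, ∑ i, inflow q c z n v k i := by
    rw [sum_comm, sum_comm (s := Icc 0 n)]
    exact sum_congr rfl fun i _ => sum_Icc_eq_sum_Icc_of_shift (fun _ => outflow_eq_zero)
      (fun _ => inflow_eq_zero) fun _ => outflow_eq_inflow h
  rw [sum_congr rfl fun k hk => sum_outflow h (mem_Icc.1 hk).2,
    sum_congr rfl fun k _ => sum_inflow h k, ← sub_eq_zero, ← sum_sub_distrib] at hflow
  rw [← sub_eq_zero, saalschutzSum, saalschutzSum, sum_mul, sum_mul, ← sum_sub_distrib, ← hflow]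
  refine sum_congr rfl fun k _ => ?_
  rw [mul_comm q v]
  ring

omit [DecidableEq ι] in
lemma saalschutzProd_base_mul (n : ι → ℕ) (v : K) :
    saalschutzProd q c z n (q * v) * ∏ r, (1 - v * z r) =
      saalschutzProd q c z n v * ∏ r, (1 - v * qShift q z n r) := by
  simp only [saalschutzProd, mul_assoc _ (∏ _, _), ← prod_mul_distrib]
  refine congrArg _ (prod_congr rfl fun r _ => ?_)
  rw [qShift, ← mul_assoc v, ← qPoch_succ, qPoch_succ']
  ring_nf

lemma saalschutzSum_self (n : ι → ℕ) : saalschutzSum q c z n c = saalschutzProd q c z n c := by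
  rw [saalschutzSum, sum_eq_single_of_mem 0 (mem_Icc.2 ⟨le_rfl, zero_le⟩) fun k _ hk => ?_]
  · simp only [saalschutzCoeff, saalschutzProd, kernelDenom, qShift_zero, crossPoch_zero,
      tsub_zero, Pi.zero_apply, qPoch_zero, gaussPow_zero, sum_const_zero, one_mul, mul_one]
    ring
  · rw [gaussPow_self, mul_zero, mul_zero]
    exact fun h0 => hk (funext fun r => sum_eq_zero_iff.1 h0 r (mem_univ r))

lemma saalschutzSum_eq_saalschutzProd_of_mem_orbit [Nonempty ι] (h : QGeneric q z)
    (hcz : ∀ r m, c * z r * q ^ m ≠ 1) (n : ι → ℕ) (m : ℕ) :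
    saalschutzSum q c z n (q ^ m * c) = saalschutzProd q c z n (q ^ m * c) := by
  induction m with
  | zero => rw [pow_zero, one_mul, saalschutzSum_self]
  | succ m ih =>
    have hne : ∏ r, (1 - q ^ m * c * z r) ≠ 0 := prod_ne_zero_iff.2 fun r _ =>
      sub_ne_zero.2 fun h1 => hcz r m (by rw [h1]; ring)
    refine mul_right_cancel₀ hne ?_
    rw [pow_succ', mul_assoc q, saalschutzSum_base_mul h, saalschutzProd_base_mul, ih]

open Polynomial in
theorem saalschutzSum_eq_saalschutzProd [Nonempty ι] (h : QGeneric q z) (hc : c ≠ 0)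
    (hcz : ∀ r m, c * z r * q ^ m ≠ 1) (n : ι → ℕ) (v : K) :
    saalschutzSum q c z n v = saalschutzProd q c z n v := by
  let P : K[X] := ∑ k ∈ Icc 0 n, C (saalschutzCoeff q c z k (n - k)) *
    (qPoch X (C q) (∑ i, n i - ∑ i, k i) * gaussPow (C c) (C q) X (∑ i, k i))
  let Q : K[X] := C ((crossPoch q z z n)⁻¹ * qPoch c q (∑ i, n i)) *
    ∏ i, qPoch (X * C (z i)) (C q) (n i)
  have hP (u : K) : P.eval u = saalschutzSum q c z n u := by
    simp only [P, saalschutzSum, ← coe_evalRingHom, map_sum, map_mul, map_qPoch, map_gaussPow]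
    simp only [coe_evalRingHom, eval_C, eval_X]
  have hQ (u : K) : Q.eval u = saalschutzProd q c z n u := by
    simp only [Q, saalschutzProd, ← coe_evalRingHom, map_prod, map_mul, map_qPoch]
    simp only [coe_evalRingHom, eval_C, eval_X]
  have horbit : (Set.range fun m : ℕ => q ^ m * c).Infinite :=
    Set.infinite_range_of_injective ((mul_left_injective₀ hc).comp h.pow_injective)
  have hPQ : P = Q := eq_of_infinite_eval_eq P Q <| horbit.mono <| by
    rintro _ ⟨m, rfl⟩
    rw [Set.mem_ofPred_eq, hP, hQ, saalschutzSum_eq_saalschutzProd_of_mem_orbit h hcz]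
  rw [← hP, hPQ, hQ]

end Saalschutz

section BaileyPair

variable {K : Type*} [Field K] {ι : Type*} [Fintype ι]

/-- The `A_ℓ` Bailey transform matrix `M(i; j)` for `j ≤ i`, where `X k` stands for `x_k / x_ℓ`. -/
def baileyMatrix (q a : K) (X : ι → K) (i j : ι → ℕ) : K :=
  (crossPoch q (qShift q X j) (qShift q X j) (i - j))⁻¹ *
    ∏ k, (qPoch (a * q * X k) q (i k + ∑ s, j s))⁻¹

/-- The factor by which the Bailey lemma multiplies `A_N`. -/
def baileyMultiplier (q a ρ σ : K) (X : ι → K) (N : ι → ℕ) : K :=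
  (∏ k, (qPoch (a * q / ρ * X k) q (N k))⁻¹) * (∏ k, qPoch (σ * X k) q (N k)) *
    (qPoch ρ q (∑ s, N s) / qPoch (a * q / σ) q (∑ s, N s)) * (a * q / (ρ * σ)) ^ ∑ s, N s

/-- The coefficient of `B_y` in the sequence `B'_N` of the Bailey lemma, for `y ≤ N`. -/
def baileyKernel (q a ρ σ : K) (X : ι → K) (N y : ι → ℕ) : K :=
  (∏ k, qPoch (σ * X k) q (y k) * (qPoch (a * q / ρ * X k) q (N k))⁻¹) *
    (crossPoch q (qShift q X y) (qShift q X y) (N - y))⁻¹ *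
    (qPoch (a * q / (ρ * σ)) q (∑ s, N s - ∑ s, y s) * qPoch ρ q (∑ s, y s) /
      qPoch (a * q / σ) q (∑ s, N s)) * (a * q / (ρ * σ)) ^ ∑ s, y s

/-- The common factor of all summands of `∑ y, baileyKernel (m + n) y * baileyMatrix y m`. -/
def baileyPrefactor (q a ρ σ : K) (X : ι → K) (m n : ι → ℕ) : K :=
  (∏ k, qPoch (σ * X k) q (m k) / (qPoch (a * q / ρ * X k) q (m k + n k) *
    qPoch (a * q * X k) q (m k + n k + ∑ s, m s))) *
    (qPoch ρ q (∑ s, m s) * (a * q / (ρ * σ)) ^ (∑ s, m s) /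
      qPoch (a * q / σ) q (∑ s, m s + ∑ s, n s))

variable {q a ρ σ : K} {X : ι → K}

lemma qPoch_div_qPoch_eq {b s : K} {N d : ℕ} (hb : qPoch b q (N + d) ≠ 0) (m k : ℕ) :
    qPoch s q (m + k) / qPoch b q N =
      qPoch s q m / qPoch b q (N + d) * (qPoch (s * q ^ m) q k * qPoch (b * q ^ N) q d) := by
  rw [qPoch_add] at hb ⊢
  have := left_ne_zero_of_mul hb
  have := right_ne_zero_of_mul hb
  rw [qPoch_add b]
  field_simp

lemma prod_qPoch_div_prod_qPoch_eq (hσ : σ ≠ 0) (haX : ∀ k n, qPoch (a * q * X k) q n ≠ 0)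
    (m k d : ι → ℕ) :
    (∏ i, qPoch (σ * X i) q (m i + k i)) / ∏ i, qPoch (a * q * X i) q (m i + k i + ∑ s, m s) =
      (∏ i, qPoch (σ * X i) q (m i)) /
        (∏ i, qPoch (a * q * X i) q (m i + (k i + d i) + ∑ s, m s)) *
          ∏ i, qPoch (σ * qShift q X m i) q (k i) * qPoch (a * q / σ * q ^ (∑ s, m s) *
            qShift q (fun i => σ * qShift q X m i) k i) q (d i) := by
  simp only [← prod_div_distrib, ← prod_mul_distrib]
  refine prod_congr rfl fun i _ => ?_
  have hbase : a * q / σ * q ^ (∑ s, m s) * qShift q (fun i => σ * qShift q X m i) k i =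
      a * q * X i * q ^ (m i + k i + ∑ s, m s) := by
    simp only [qShift]
    field_simp
    ring
  have hindex : m i + (k i + d i) + ∑ s, m s = m i + k i + ∑ s, m s + d i := by ring
  rw [hbase, hindex, qPoch_div_qPoch_eq (haX i _), qShift, mul_assoc σ (X i)]

lemma baileyKernel_mul_baileyMatrix (hσ : σ ≠ 0) (hρ : ρ ≠ 0)
    (haX : ∀ k n, qPoch (a * q * X k) q n ≠ 0) (m : ι → ℕ) {k n : ι → ℕ} (hkn : k ≤ n) :
    baileyKernel q a ρ σ X (m + n) (m + k) * baileyMatrix q a X (m + k) m =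
      baileyPrefactor q a ρ σ X m n *
        (saalschutzCoeff q (a * q / σ * q ^ ∑ s, m s) (fun i => σ * qShift q X m i) k (n - k) *
          (qPoch (a * q / (ρ * σ)) q (∑ s, n s - ∑ s, k s) *
            gaussPow (a * q / σ * q ^ ∑ s, m s) q (a * q / (ρ * σ)) (∑ s, k s))) := by
  obtain ⟨d, rfl⟩ := exists_add_of_le hkn
  have hgauss : gaussPow (a * q / σ * q ^ ∑ s, m s) q (a * q / (ρ * σ)) (∑ s, k s) =
      (a * q / (ρ * σ)) ^ (∑ s, k s) * qPoch (ρ * q ^ ∑ s, m s) q (∑ s, k s) := by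
    rw [← gaussPow_mul_self]
    field_simp
  have hsub : m + (k + d) - (m + k) = d := by rw [← add_assoc, add_tsub_cancel_left]
  have hrows := prod_qPoch_div_prod_qPoch_eq hσ haX m k d
  rw [hgauss, saalschutzCoeff, kernelDenom_const_mul hσ, kernelDenom, ← qShift_add,
    baileyKernel, baileyMatrix, baileyPrefactor, hsub, add_tsub_cancel_left, add_tsub_cancel_left]
  generalize a * q / (ρ * σ) = t
  simp only [Pi.add_apply, sum_add_distrib, Nat.add_sub_add_left, qPoch_add ρ]
  rw [prod_mul_distrib, prod_div_distrib, prod_mul_distrib, prod_inv_distrib, prod_inv_distrib]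
  linear_combination (∏ i, qPoch (a * q / ρ * X i) q (m i + (k i + d i)))⁻¹ *
    (crossPoch q (qShift q X (m + k)) (qShift q X (m + k)) d)⁻¹ *
    (crossPoch q (qShift q X m) (qShift q X m) k)⁻¹ *
    (qPoch t q (∑ s, k s + ∑ s, d s - ∑ s, k s) * qPoch ρ q (∑ s, m s) *
      qPoch (ρ * q ^ ∑ s, m s) q (∑ s, k s) /
      qPoch (a * q / σ) q (∑ s, m s + (∑ s, k s + ∑ s, d s))) *
    t ^ (∑ s, m s + ∑ s, k s) * hrows

lemma baileyPrefactor_mul_saalschutzProd (hσ : σ ≠ 0)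
    (hρX : ∀ k n, qPoch (a * q / ρ * X k) q n ≠ 0) (hqσ : ∀ n, qPoch (a * q / σ) q n ≠ 0)
    (m n : ι → ℕ) :
    baileyPrefactor q a ρ σ X m n *
        saalschutzProd q (a * q / σ * q ^ ∑ s, m s) (fun i => σ * qShift q X m i) n
          (a * q / (ρ * σ)) =
      baileyMatrix q a X (m + n) m * baileyMultiplier q a ρ σ X m := by
  have hrow (i : ι) : qPoch (a * q / (ρ * σ) * (σ * qShift q X m i)) q (n i) =
      qPoch (a * q / ρ * X i) q (m i + n i) / qPoch (a * q / ρ * X i) q (m i) := by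
    rw [qPoch_add, mul_div_cancel_left₀ _ (hρX i _), qShift]
    field_simp
  have hσm := hqσ (∑ s, m s)
  have hσmn := hqσ (∑ s, m s + ∑ s, n s)
  have hρm : ∏ i, qPoch (a * q / ρ * X i) q (m i) ≠ 0 := prod_ne_zero_iff.2 fun i _ => hρX i _
  have hρmn : ∏ i, qPoch (a * q / ρ * X i) q (m i + n i) ≠ 0 :=
    prod_ne_zero_iff.2 fun i _ => hρX i _
  rw [saalschutzProd, crossPoch_const_mul hσ, baileyPrefactor, baileyMatrix, baileyMultiplier,
    add_tsub_cancel_left]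
  simp only [hrow, prod_mul_distrib, prod_div_distrib, prod_inv_distrib, Pi.add_apply]
  generalize a * q / σ = b at *
  generalize a * q / ρ = c at *
  rw [qPoch_add] at hσmn ⊢
  have := right_ne_zero_of_mul hσmn
  field_simp

/-- Milne's `A_ℓ` `q`-Pfaff–Saalschütz summation, applied to the points `σ * X i * q ^ m i`. -/
theorem sum_baileyKernel_mul_baileyMatrix [Nonempty ι] [DecidableEq ι] (hX : QGeneric q X)
    (ha : a ≠ 0) (hρ : ρ ≠ 0) (hσ : σ ≠ 0) (haX : ∀ k n, qPoch (a * q * X k) q n ≠ 0)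
    (hρX : ∀ k n, qPoch (a * q / ρ * X k) q n ≠ 0) (hqσ : ∀ n, qPoch (a * q / σ) q n ≠ 0)
    {m N : ι → ℕ} (hmN : m ≤ N) :
    ∑ y ∈ Icc m N, baileyKernel q a ρ σ X N y * baileyMatrix q a X y m =
      baileyMatrix q a X N m * baileyMultiplier q a ρ σ X m := by
  obtain ⟨n, rfl⟩ := exists_add_of_le hmN
  have hq := hX.base_ne_zero
  have hIcc : Icc m (m + n) = (Icc 0 n).map (addLeftEmbedding m) := by
    rw [map_add_left_Icc, add_zero]
  have hcz (i : ι) (j : ℕ) : a * q / σ * q ^ (∑ s, m s) * (σ * qShift q X m i) * q ^ j ≠ 1 := by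
    have hfactor := haX i (∑ s, m s + m i + j + 1)
    rw [qPoch_succ] at hfactor
    intro h1
    refine right_ne_zero_of_mul hfactor (sub_eq_zero.2 ?_)
    rw [← h1, qShift, pow_add, pow_add]
    field_simp
  have hc : a * q / σ * q ^ ∑ s, m s ≠ 0 := by positivity
  have hsaalschutz := saalschutzSum_eq_saalschutzProd ((hX.qShift m).const_mul hσ) hc hcz n
  rw [hIcc, sum_map, ← baileyPrefactor_mul_saalschutzProd hσ hρX hqσ, ← hsaalschutz, saalschutzSum,
    mul_sum]
  exact sum_congr rfl fun k hk => baileyKernel_mul_baileyMatrix hσ hρ haX m (mem_Icc.1 hk).2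

/-- `(A, B)` is an `A_ℓ`-Bailey pair, with `X k` standing for `x_k / x_ℓ`. -/
def IsBaileyPair [DecidableEq ι] (q a : K) (X : ι → K) (A B : (ι → ℕ) → K) : Prop :=
  ∀ N, B N = ∑ y ∈ Icc 0 N, baileyMatrix q a X N y * A y

theorem Al_bailey_lemma_general [Nonempty ι] [DecidableEq ι] {A B : (ι → ℕ) → K}
    (hAB : IsBaileyPair q a X A B) (hX : QGeneric q X) (ha : a ≠ 0) (hρ : ρ ≠ 0) (hσ : σ ≠ 0)
    (haX : ∀ k n, qPoch (a * q * X k) q n ≠ 0) (hρX : ∀ k n, qPoch (a * q / ρ * X k) q n ≠ 0)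
    (hqσ : ∀ n, qPoch (a * q / σ) q n ≠ 0) :
    IsBaileyPair q a X (fun N => baileyMultiplier q a ρ σ X N * A N)
      (fun N => ∑ y ∈ Icc 0 N, baileyKernel q a ρ σ X N y * B y) := by
  intro N
  calc ∑ y ∈ Icc 0 N, baileyKernel q a ρ σ X N y * B y
      = ∑ y ∈ Icc 0 N, ∑ m ∈ Icc 0 y,
          baileyKernel q a ρ σ X N y * baileyMatrix q a X y m * A m := by
        simp only [hAB _, mul_sum, mul_assoc]
    _ = ∑ m ∈ Icc 0 N, ∑ y ∈ Icc m N,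
          baileyKernel q a ρ σ X N y * baileyMatrix q a X y m * A m :=
        sum_comm' fun y m => by
          simp only [mem_Icc]
          exact ⟨fun ⟨⟨_, hyN⟩, _, hmy⟩ => ⟨⟨hmy, hyN⟩, zero_le, hmy.trans hyN⟩,
            fun ⟨⟨hmy, hyN⟩, _⟩ => ⟨⟨zero_le, hyN⟩, zero_le, hmy⟩⟩
    _ = ∑ m ∈ Icc 0 N, baileyMatrix q a X N m * (baileyMultiplier q a ρ σ X m * A m) :=
        sum_congr rfl fun m hm => by
          rw [← sum_mul, sum_baileyKernel_mul_baileyMatrix hX ha hρ hσ haX hρX hqσ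
            (mem_Icc.1 hm).2, mul_assoc]

end BaileyPair

section Translation

lemma qp_natCast (a q : ℂ) (n : ℕ) : qp a q n = qPoch a q n := by
  simp only [qp, qPoch, Int.natCast_nonneg, if_true, Int.toNat_natCast, zpow_natCast]

variable {ℓ : ℕ} {q : ℂ} {x : Fin ℓ → ℂ} {xl : ℂ}

lemma qp_cross (hq : q ≠ 0) (hxl : xl ≠ 0) {i j : Fin ℓ → ℕ} (hji : j ≤ i) (r s : Fin ℓ) :
    qp (q * (x r / x s) * q ^ ((j r : ℤ) - (j s : ℤ))) q ((i r : ℤ) - (j r : ℤ)) =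
      qPoch (q * (qShift q (fun k => x k / xl) j r / qShift q (fun k => x k / xl) j s)) q
        ((i - j) r) := by
  rw [← Nat.cast_sub (hji r), qp_natCast, Pi.sub_apply, zpow_sub₀ hq, zpow_natCast, zpow_natCast,
    qShift, qShift, div_mul_eq_mul_div, div_mul_eq_mul_div, div_div_div_cancel_right₀ hxl,
    mul_assoc, div_mul_div_comm]

lemma prod_qp_cross_inv (hq : q ≠ 0) (hxl : xl ≠ 0) {i j : Fin ℓ → ℕ} (hji : j ≤ i) :
    ∏ r, ∏ s,
      (qp (q * (x r / x s) * q ^ ((j r : ℤ) - (j s : ℤ))) q ((i r : ℤ) - (j r : ℤ)))⁻¹ =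
      (crossPoch q (qShift q (fun k => x k / xl) j) (qShift q (fun k => x k / xl) j)
        (i - j))⁻¹ := by
  simp only [qp_cross hq hxl hji, prod_inv_distrib, crossPoch]

lemma MA_eq_baileyMatrix (hq : q ≠ 0) (hxl : xl ≠ 0) (a : ℂ) {i j : Fin ℓ → ℕ} (hji : j ≤ i) :
    MA ℓ q a x xl i j = baileyMatrix q a (fun k => x k / xl) i j := by
  simp only [MA, baileyMatrix, prod_qp_cross_inv hq hxl hji, ← Nat.cast_sum, ← Nat.cast_add,
    qp_natCast]

lemma isBaileyPair_iff_MA (hq : q ≠ 0) (hxl : xl ≠ 0) (a : ℂ) (A B : (Fin ℓ → ℕ) → ℂ) :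
    IsBaileyPair q a (fun k => x k / xl) A B ↔
      ∀ N, B N = ∑ y ∈ Icc 0 N, MA ℓ q a x xl N y * A y := by
  refine forall_congr' fun N => ?_
  rw [sum_congr rfl fun y hy => by rw [← MA_eq_baileyMatrix hq hxl a (mem_Icc.1 hy).2]]

lemma baileyMultiplier_eq_qp (a ρ σ : ℂ) (N : Fin ℓ → ℕ) :
    baileyMultiplier q a ρ σ (fun k => x k / xl) N =
      (∏ k, (qp (a * q / ρ * (x k / xl)) q (N k : ℤ))⁻¹) *
        (∏ k, qp (σ * (x k / xl)) q (N k : ℤ)) *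
        (qp ρ q (∑ s, (N s : ℤ)) / qp (a * q / σ) q (∑ s, (N s : ℤ))) *
        (a * q / (ρ * σ)) ^ (∑ s, (N s : ℤ)) := by
  simp only [baileyMultiplier, ← Nat.cast_sum, qp_natCast, zpow_natCast]

lemma baileyKernel_eq_qp (hq : q ≠ 0) (hxl : xl ≠ 0) (a ρ σ : ℂ) {N y : Fin ℓ → ℕ} (hy : y ≤ N) :
    baileyKernel q a ρ σ (fun k => x k / xl) N y =
      (∏ k, qp (σ * (x k / xl)) q (y k : ℤ) * (qp (a * q / ρ * (x k / xl)) q (N k : ℤ))⁻¹) *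
        (∏ r, ∏ s,
          (qp (q * (x r / x s) * q ^ ((y r : ℤ) - (y s : ℤ))) q ((N r : ℤ) - (y r : ℤ)))⁻¹) *
        (qp (a * q / (ρ * σ)) q ((∑ s, (N s : ℤ)) - ∑ s, (y s : ℤ)) *
          qp ρ q (∑ s, (y s : ℤ)) / qp (a * q / σ) q (∑ s, (N s : ℤ))) *
        (a * q / (ρ * σ)) ^ (∑ s, (y s : ℤ)) := by
  simp only [baileyKernel, prod_qp_cross_inv hq hxl hy, ← Nat.cast_sum,
    ← Nat.cast_sub (sum_le_sum fun s _ => hy s), qp_natCast, zpow_natCast]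

lemma qGeneric_of_qp_cross_ne_zero (hq : q ≠ 0) (hx : ∀ k, x k ≠ 0) (hxl : xl ≠ 0)
    (h : ∀ i j : Fin ℓ → ℕ, (∀ k, j k ≤ i k) → ∀ r s : Fin ℓ,
      qp (q * (x r / x s) * q ^ ((j r : ℤ) - (j s : ℤ))) q ((i r : ℤ) - (j r : ℤ)) ≠ 0) :
    QGeneric q fun k => x k / xl := by
  refine qGeneric_of_crossPoch_ne_zero hq (fun k => div_ne_zero (hx k) hxl) fun k m => ?_
  refine prod_ne_zero_iff.2 fun r _ => prod_ne_zero_iff.2 fun s _ => ?_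
  have hkm : k ≤ k + m := le_self_add
  have hqp := h (k + m) k hkm r s
  rwa [qp_cross hq hxl hkm, add_tsub_cancel_left] at hqp

end Translation

/-- **The A_ℓ generalization of Bailey's Lemma.**
If `(A, B)` is an `A_ℓ`-Bailey pair, then the primed pair `(A', B')` defined by
(2.7a)–(2.7b) is again an `A_ℓ`-Bailey pair. -/
theorem Al_bailey_lemma (ℓ : ℕ) (hℓ : 1 ≤ ℓ) (q a ρ σ : ℂ)
    (hq : q ≠ 0) (ha : a ≠ 0) (hρ : ρ ≠ 0) (hσ : σ ≠ 0)
    (x : Fin ℓ → ℂ) (hx : ∀ k, x k ≠ 0)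
    (xl : ℂ) (hxl : xl = x ⟨ℓ - 1, by omega⟩)
    -- genericity: the q-shifted factorials occurring in denominators are nonzero
    (hd1 : ∀ i j : Fin ℓ → ℕ, (∀ k, j k ≤ i k) → ∀ r s : Fin ℓ,
      qp (q * (x r / x s) * q ^ ((j r : ℤ) - (j s : ℤ))) q ((i r : ℤ) - (j r : ℤ)) ≠ 0)
    (hd2 : ∀ i j : Fin ℓ → ℕ, (∀ k, j k ≤ i k) → ∀ k : Fin ℓ,
      qp (a * q * (x k / xl)) q ((i k : ℤ) + ∑ s, (j s : ℤ)) ≠ 0)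
    (hd3 : ∀ (k : Fin ℓ) (n : ℕ), qp (a * q / ρ * (x k / xl)) q (n : ℤ) ≠ 0)
    (hd4 : ∀ n : ℕ, qp (a * q / σ) q (n : ℤ) ≠ 0)
    (A B A' B' : (Fin ℓ → ℕ) → ℂ)
    -- `(A, B)` is an `A_ℓ`-Bailey pair
    (hAB : ∀ N : Fin ℓ → ℕ, B N = ∑ y ∈ Finset.Icc 0 N, MA ℓ q a x xl N y * A y)
    -- definition (2.7a) of `A'`
    (hA' : ∀ N : Fin ℓ → ℕ, A' N =
      (∏ k, (qp (a * q / ρ * (x k / xl)) q (N k : ℤ))⁻¹) *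
      (∏ k, qp (σ * (x k / xl)) q (N k : ℤ)) *
      (qp ρ q (∑ s, (N s : ℤ)) / qp (a * q / σ) q (∑ s, (N s : ℤ))) *
      (a * q / (ρ * σ)) ^ (∑ s, (N s : ℤ)) * A N)
    -- definition (2.7b) of `B'`
    (hB' : ∀ N : Fin ℓ → ℕ, B' N =
      ∑ y ∈ Finset.Icc 0 N,
        ((∏ k, qp (σ * (x k / xl)) q (y k : ℤ) *
            (qp (a * q / ρ * (x k / xl)) q (N k : ℤ))⁻¹) *
         (∏ r, ∏ s,
           (qp (q * (x r / x s) * q ^ ((y r : ℤ) - (y s : ℤ))) q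
             ((N r : ℤ) - (y r : ℤ)))⁻¹) *
         (qp (a * q / (ρ * σ)) q ((∑ s, (N s : ℤ)) - ∑ s, (y s : ℤ)) *
            qp ρ q (∑ s, (y s : ℤ)) / qp (a * q / σ) q (∑ s, (N s : ℤ))) *
         (a * q / (ρ * σ)) ^ (∑ s, (y s : ℤ)) * B y)) :
    -- then `(A', B')` is an `A_ℓ`-Bailey pair
    ∀ N : Fin ℓ → ℕ, B' N = ∑ y ∈ Finset.Icc 0 N, MA ℓ q a x xl N y * A' y := by
  have : Nonempty (Fin ℓ) := ⟨⟨ℓ - 1, by omega⟩⟩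
  have hxl0 : xl ≠ 0 := hxl ▸ hx _
  have hA'_eq : A' = fun N => baileyMultiplier q a ρ σ (fun k => x k / xl) N * A N :=
    funext fun N => by rw [hA', baileyMultiplier_eq_qp]
  have hB'_eq : B' = fun N => ∑ y ∈ Icc 0 N, baileyKernel q a ρ σ (fun k => x k / xl) N y * B y :=
    funext fun N => (hB' N).trans <| sum_congr rfl fun y hy => by
      rw [baileyKernel_eq_qp hq hxl0 a ρ σ (mem_Icc.1 hy).2]
  rw [← isBaileyPair_iff_MA hq hxl0] at hAB ⊢
  rw [hA'_eq, hB'_eq]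
  exact Al_bailey_lemma_general hAB (qGeneric_of_qp_cross_ne_zero hq hx hxl0 hd1) ha hρ hσ
    (fun k n => by simpa [qp_natCast] using hd2 (fun _ => n) 0 (fun _ => n.zero_le) k)
    (fun k n => by simpa only [qp_natCast] using hd3 k n)
    (fun n => by simpa only [qp_natCast] using hd4 n)
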